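/- For all real numbers a and b, the symmetric 3×3 real matrix [[a, −a, √2·b], [−a, a, −√2·b], [√2·b, −√2·b, −2a]] (the Kelvin representation of a 2D harmonic fourth-order tensor with H₁₁₁₁ = a and H₁₁₁₂ = b) has eigenvalues exactly 0, 2√(a² + b²) and −2√(a² + b²); in particular, when (a,b) ≠ (0,0) its nonzero eigenvalues are two opposite real numbers. -/

import Mathlib

noncomputable section

/-!
The matrix kills `(1, 1, 0)`, and on the orthogonal plane, in the orthonormal basis
`(1, -1, 0) / √2`, `(0, 0, 1)`, it acts as `2 • !![a, b; b, -a]`. That block is traceless with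
determinant `-4 (a² + b²)`, so the characteristic equation is `lam * (4 (a² + b²) - lam²) = 0`.
-/

section CommRing

variable {R : Type*} [CommRing R]

/-- The Kelvin matrix of the 2D harmonic fourth-order tensor with `H₁₁₁₁ = a` and `H₁₁₁₂ = b`.
The Kelvin normalization factor `√2` is a parameter `s`, so that the matrix makes sense over every
commutative ring; it is meant to satisfy `s ^ 2 = 2`. -/
def kelvinHarmonicMatrix (s a b : R) : Matrix (Fin 3) (Fin 3) R :=
  !![a, -a, s * b;
     -a, a, -(s * b);
     s * b, -(s * b), -2 * a]

theorem det_kelvinHarmonicMatrix_sub_smul_one {s : R} (hs : s ^ 2 = 2) (a b lam : R) :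
    (kelvinHarmonicMatrix s a b - lam • (1 : Matrix (Fin 3) (Fin 3) R)).det =
      lam * (4 * (a ^ 2 + b ^ 2) - lam ^ 2) := by
  have sub_eq : kelvinHarmonicMatrix s a b - lam • (1 : Matrix (Fin 3) (Fin 3) R) =
      !![a - lam, -a, s * b;
         -a, a - lam, -(s * b);
         s * b, -(s * b), -2 * a - lam] := by
    simp [kelvinHarmonicMatrix, Matrix.one_fin_three]
  simp only [sub_eq, Matrix.det_fin_three, Matrix.of_apply, Matrix.cons_val]
  linear_combination 2 * lam * b ^ 2 * hs

theorem det_kelvinHarmonicMatrix_sub_smul_one_eq_zero_iff [NoZeroDivisors R] {s r a b : R}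
    (hs : s ^ 2 = 2) (hr : r ^ 2 = a ^ 2 + b ^ 2) (lam : R) :
    (kelvinHarmonicMatrix s a b - lam • (1 : Matrix (Fin 3) (Fin 3) R)).det = 0 ↔
      lam = 0 ∨ lam = 2 * r ∨ lam = -(2 * r) := by
  have four_mul_eq_sq : 4 * (a ^ 2 + b ^ 2) = (2 * r) ^ 2 := by
    linear_combination -4 * hr
  rw [det_kelvinHarmonicMatrix_sub_smul_one hs, four_mul_eq_sq, mul_eq_zero, sub_eq_zero,
    eq_comm (a := (2 * r) ^ 2), sq_eq_sq_iff_eq_or_eq_neg]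

end CommRing

section OrderedRing

variable {R : Type*} [CommRing R] [LinearOrder R] [IsStrictOrderedRing R]

theorem ne_zero_of_sq_eq_sq_add_sq {r a b : R} (hr : r ^ 2 = a ^ 2 + b ^ 2)
    (hab : (a, b) ≠ (0, 0)) : r ≠ 0 := by
  rintro rfl
  have sum_eq_zero : a * a + b * b = 0 := by linear_combination -hr
  exact hab (Prod.ext_iff.mpr (mul_self_add_mul_self_eq_zero.mp sum_eq_zero))

theorem kelvin_harmonic_eigenvalues_general {s r a b : R} (hs : s ^ 2 = 2)
    (hr : r ^ 2 = a ^ 2 + b ^ 2) :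
    (∀ lam : R,
      (kelvinHarmonicMatrix s a b - lam • (1 : Matrix (Fin 3) (Fin 3) R)).det = 0 ↔
        lam = 0 ∨ lam = 2 * r ∨ lam = -(2 * r)) ∧
      ((a, b) ≠ (0, 0) → 2 * r ≠ 0) :=
  ⟨det_kelvinHarmonicMatrix_sub_smul_one_eq_zero_iff hs hr,
    fun hab => mul_ne_zero two_ne_zero (ne_zero_of_sq_eq_sq_add_sq hr hab)⟩

end OrderedRing

/-- The Kelvin matrix of a 2D harmonic fourth-order tensor with
components `H₁₁₁₁ = a`, `H₁₁₁₂ = b` has eigenvalues exactly `0`,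
`2√(a²+b²)` and `-2√(a²+b²)`; when `(a,b) ≠ (0,0)` the two nonzero eigenvalues
are opposite nonzero reals. -/
theorem kelvin_harmonic_eigenvalues (a b : ℝ) :
    (∀ lam : ℝ,
      Matrix.det
          ((!![a, -a, Real.sqrt 2 * b;
              -a, a, -(Real.sqrt 2 * b);
              Real.sqrt 2 * b, -(Real.sqrt 2 * b), -2 * a] :
            Matrix (Fin 3) (Fin 3) ℝ) - lam • (1 : Matrix (Fin 3) (Fin 3) ℝ)) = 0
        ↔ lam = 0 ∨ lam = 2 * Real.sqrt (a ^ 2 + b ^ 2)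
            ∨ lam = -(2 * Real.sqrt (a ^ 2 + b ^ 2))) ∧
      ((a, b) ≠ (0, 0) → 2 * Real.sqrt (a ^ 2 + b ^ 2) ≠ 0) :=
  kelvin_harmonic_eigenvalues_general (Real.sq_sqrt zero_le_two)
    (Real.sq_sqrt (add_nonneg (sq_nonneg a) (sq_nonneg b)))
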